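/- arXiv:2509.05912 — 2 statements merged into one kernel-verified Lean document; each statement's English description precedes it below -/
import Mathlib

section
/- Let t : 𝕆 × 𝕆 → 𝕆 × 𝕆 be defined by t(x,y) = (ȳ, x·ȳ). Then for all x, y ∈ 𝕆 with ‖x‖ = ‖y‖ = 1, one has t(t(t(x,y))) = (x,y); that is, t has order 3 on S⁷ × S⁷. Moreover t(t(x,y)) = (y·x̄, x̄) for such x, y. -/
noncomputable section

/-- The octonions as the Cayley–Dickson double of the quaternions. -/
abbrev Oct : Type := Quaternion ℝ × Quaternion ℝ

namespace Oct

/-- Cayley–Dickson multiplication: (a,b)·(c,d) = (ac − d̄b, da + bc̄). -/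
def mul (x y : Oct) : Oct :=
  (x.1 * y.1 - star y.2 * x.2, y.2 * x.1 + x.2 * star y.1)

/-- The unit 1 = (1,0). -/
def one : Oct := (1, 0)

/-- Octonionic conjugation κ(a,b) = (ā, −b). -/
def conj (x : Oct) : Oct := (star x.1, -x.2)

/-- The squared Euclidean norm ‖(a,b)‖² = ‖a‖² + ‖b‖². -/
def normSq (x : Oct) : ℝ := ‖x.1‖ ^ 2 + ‖x.2‖ ^ 2

/-- Left multiplication L(s) : y ↦ s·y. -/
def L (s : Oct) : Oct → Oct := fun y => mul s y

/-- A linear automorphism of 𝕆 is an isometry if it preserves the Euclidean norm. -/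
def IsIsometry (A : Oct ≃ₗ[ℝ] Oct) : Prop := ∀ x, normSq (A x) = normSq x

/-- A triality triple: ℝ-linear isometric bijections with B(x·y) = (Cx)·(Ay). -/
def IsTriality (A B C : Oct ≃ₗ[ℝ] Oct) : Prop :=
  IsIsometry A ∧ IsIsometry B ∧ IsIsometry C ∧
    ∀ x y : Oct, B (mul x y) = mul (C x) (A y)

/-- Octonionic conjugation κ as an ℝ-linear equivalence. -/
def kappa : Oct ≃ₗ[ℝ] Oct where
  toFun := conj
  invFun := conj
  left_inv := fun x => by simp [conj]
  right_inv := fun x => by simp [conj]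
  map_add' := fun x y => by simp [conj, Prod.ext_iff, star_add, neg_add, add_comm]
  map_smul' := fun r x => by simp [conj, Prod.ext_iff]

/-- D ↦ κ∘D∘κ. -/
def conjOp (D : Oct ≃ₗ[ℝ] Oct) : Oct ≃ₗ[ℝ] Oct := kappa.trans (D.trans kappa)

/-- Triples of ℝ-linear bijections of 𝕆. -/
abbrev Triple := (Oct ≃ₗ[ℝ] Oct) × (Oct ≃ₗ[ℝ] Oct) × (Oct ≃ₗ[ℝ] Oct)

/-- The triality map τ(A,B,C) = (κBκ, κCκ, A). -/
def tauMap (T : Triple) : Triple := (conjOp T.2.1, conjOp T.2.2, T.1)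

/-- The outer involution σ(A,B,C) = (B, A, κCκ). -/
def sigmaMap (T : Triple) : Triple := (T.2.1, T.1, conjOp T.2.2)

/-- The induced map on S⁷ × S⁷: t(x,y) = (ȳ, x·ȳ). -/
def tS (p : Oct × Oct) : Oct × Oct := (conj p.2, mul p.1 (conj p.2))

/-- The swap s(x,y) = (y,x). -/
def swap (p : Oct × Oct) : Oct × Oct := (p.2, p.1)

end Oct

open Oct

theorem Oct.normSq_coords (x : Oct) (h : normSq x = 1) :
    x.1.re ^ 2 + x.1.imI ^ 2 + x.1.imJ ^ 2 + x.1.imK ^ 2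
      + (x.2.re ^ 2 + x.2.imI ^ 2 + x.2.imJ ^ 2 + x.2.imK ^ 2) = 1 := by
  have e : ∀ a : Quaternion ℝ, ‖a‖ ^ 2 = a.re ^ 2 + a.imI ^ 2 + a.imJ ^ 2 + a.imK ^ 2 := by
    intro a
    rw [← Quaternion.normSq_def', Quaternion.normSq_eq_norm_mul_self, sq]
  rw [← e, ← e]
  exact h

theorem Oct.conj_mul_aux (x y : Oct) : conj (mul x (conj y)) = mul y (conj x) := by
  ext <;> simp [conj, mul] <;> ring

theorem Oct.conj_conj_aux (x : Oct) : conj (conj x) = x := by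
  simp [conj]

theorem Oct.left_cancel_aux (y z : Oct) (h : normSq y = 1) :
    mul (conj y) (mul y z) = z := by
  have h := normSq_coords y h
  ext <;> simp [conj, mul]
  · linear_combination z.1.re * h
  · linear_combination z.1.imI * h
  · linear_combination z.1.imJ * h
  · linear_combination z.1.imK * h
  · linear_combination z.2.re * h
  · linear_combination z.2.imI * h
  · linear_combination z.2.imJ * h
  · linear_combination z.2.imK * h

theorem Oct.right_cancel_aux (z x : Oct) (h : normSq x = 1) :
    mul (mul z (conj x)) x = z := by
  have h := normSq_coords x h
  ext <;> simp [conj, mul]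
  · linear_combination z.1.re * h
  · linear_combination z.1.imI * h
  · linear_combination z.1.imJ * h
  · linear_combination z.1.imK * h
  · linear_combination z.2.re * h
  · linear_combination z.2.imI * h
  · linear_combination z.2.imJ * h
  · linear_combination z.2.imK * h

/-- t(x,y) = (ȳ, x·ȳ) has order 3 on S⁷ × S⁷, with
t²(x,y) = (y·x̄, x̄). -/
theorem tS_order_three (x y : Oct) (hx : normSq x = 1) (hy : normSq y = 1) :
    tS (tS (tS (x, y))) = (x, y)
    ∧ tS (tS (x, y)) = (mul y (conj x), conj x) := by
  have h2 : tS (tS (x, y)) = (mul y (conj x), conj x) := by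
    simp only [tS, conj_mul_aux, left_cancel_aux y _ hy]
  refine ⟨?_, h2⟩
  rw [h2]
  simp only [tS, conj_conj_aux, right_cancel_aux y x hx]
end
end

section
/- Let s ∈ 𝕆 with ‖s‖ = 1 and s·(s·s) = 1. Then the triple (A, B, C) with A = L(s) (left multiplication by s), B = L(s̄), and C : x ↦ s̄·(x·s̄) = (s̄·x)·s̄ is a triality triple: B(x·y) = (C x)·(A y) for all x, y ∈ 𝕆. -/
noncomputable section

open Oct

theorem oct_ext (x y : Oct) (h1 : x.1.re = y.1.re) (h2 : x.1.imI = y.1.imI)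
    (h3 : x.1.imJ = y.1.imJ) (h4 : x.1.imK = y.1.imK) (h5 : x.2.re = y.2.re)
    (h6 : x.2.imI = y.2.imI) (h7 : x.2.imJ = y.2.imJ) (h8 : x.2.imK = y.2.imK) : x = y :=
  Prod.ext (Quaternion.ext _ _ h1 h2 h3 h4) (Quaternion.ext _ _ h5 h6 h7 h8)

theorem oct_normSq (x : Oct) : normSq x = x.1.re ^ 2 + x.1.imI ^ 2 + x.1.imJ ^ 2 + x.1.imK ^ 2
    + (x.2.re ^ 2 + x.2.imI ^ 2 + x.2.imJ ^ 2 + x.2.imK ^ 2) := by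
  have h (q : Quaternion ℝ) : ‖q‖ ^ 2 = q.re ^ 2 + q.imI ^ 2 + q.imJ ^ 2 + q.imK ^ 2 := by
    rw [← Quaternion.normSq_def', Quaternion.normSq_eq_norm_mul_self, sq]
  rw [normSq, h, h]

theorem oct_normSq_conj (x : Oct) : normSq (conj x) = normSq x := by
  simp [normSq, conj]

theorem oct_normSq_mul (x y : Oct) : normSq (mul x y) = normSq x * normSq y := by
  simp only [oct_normSq, mul, Quaternion.re_add, Quaternion.imI_add, Quaternion.imJ_add,
    Quaternion.imK_add, Quaternion.re_sub, Quaternion.imI_sub, Quaternion.imJ_sub,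
    Quaternion.imK_sub, Quaternion.re_mul, Quaternion.imI_mul, Quaternion.imJ_mul,
    Quaternion.imK_mul, Quaternion.re_star, Quaternion.imI_star, Quaternion.imJ_star,
    Quaternion.imK_star]
  ring

theorem oct_conj_mul_left (x y : Oct) : mul (conj x) (mul x y) = normSq x • y := by
  apply oct_ext <;> simp [oct_normSq, mul, conj] <;> ring

theorem oct_mul_conj_left (x y : Oct) : mul x (mul (conj x) y) = normSq x • y := by
  apply oct_ext <;> simp [oct_normSq, mul, conj] <;> ring

theorem oct_conj_mul_right (x y : Oct) : mul (mul y (conj x)) x = normSq x • y := by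
  apply oct_ext <;> simp [oct_normSq, mul, conj] <;> ring

theorem oct_mul_conj_right (x y : Oct) : mul (mul y x) (conj x) = normSq x • y := by
  apply oct_ext <;> simp [oct_normSq, mul, conj] <;> ring

set_option maxHeartbeats 4000000 in
theorem oct_flex (a x : Oct) : mul a (mul x a) = mul (mul a x) a := by
  apply oct_ext <;> simp [mul] <;> ring

theorem oct_mul_add (a x y : Oct) : mul a (x + y) = mul a x + mul a y := by
  apply oct_ext <;> simp [mul] <;> ring

theorem oct_add_mul (a x y : Oct) : mul (x + y) a = mul x a + mul y a := by
  apply oct_ext <;> simp [mul] <;> ring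

theorem oct_mul_smul (a : Oct) (r : ℝ) (x : Oct) : mul a (r • x) = r • mul a x := by
  apply oct_ext <;> simp [mul] <;> ring

theorem oct_smul_mul (a : Oct) (r : ℝ) (x : Oct) : mul (r • x) a = r • mul x a := by
  apply oct_ext <;> simp [mul] <;> ring

set_option maxHeartbeats 4000000 in
theorem oct_moufang (a x y : Oct) : mul (mul a (mul x a)) y = mul a (mul x (mul a y)) := by
  apply oct_ext <;> simp only [mul, Quaternion.re_add, Quaternion.imI_add, Quaternion.imJ_add,
    Quaternion.imK_add, Quaternion.re_sub, Quaternion.imI_sub, Quaternion.imJ_sub,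
    Quaternion.imK_sub, Quaternion.re_mul, Quaternion.imI_mul, Quaternion.imJ_mul,
    Quaternion.imK_mul, Quaternion.re_star, Quaternion.imI_star, Quaternion.imJ_star,
    Quaternion.imK_star] <;> ring

/-- Left multiplication as an equivalence. -/
def octLeft (a b : Oct) (h1 : ∀ x, mul b (mul a x) = x) (h2 : ∀ x, mul a (mul b x) = x) :
    Oct ≃ₗ[ℝ] Oct where
  toFun := mul a
  invFun := mul b
  left_inv := h1
  right_inv := h2
  map_add' := oct_mul_add a
  map_smul' := oct_mul_smul a

/-- Right multiplication as an equivalence. -/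
def octRight (a b : Oct) (h1 : ∀ x, mul (mul x a) b = x) (h2 : ∀ x, mul (mul x b) a = x) :
    Oct ≃ₗ[ℝ] Oct where
  toFun := fun x => mul x a
  invFun := fun x => mul x b
  left_inv := h1
  right_inv := h2
  map_add' := oct_add_mul a
  map_smul' := oct_smul_mul a

/-- for a unit cube root of unity s, the triple
(L(s), L(s̄), x ↦ s̄·(x·s̄) = (s̄·x)·s̄) is a triality triple. -/
theorem triality_triple_of_cube_root (s : Oct) (hs : normSq s = 1)
    (hcube : mul s (mul s s) = one) :
    ∃ A B C : Oct ≃ₗ[ℝ] Oct, IsTriality A B C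
      ∧ (∀ y, A y = mul s y)
      ∧ (∀ y, B y = mul (conj s) y)
      ∧ (∀ x, C x = mul (conj s) (mul x (conj s))
          ∧ mul (conj s) (mul x (conj s)) = mul (mul (conj s) x) (conj s)) := by
  have h1 (x : Oct) : mul (conj s) (mul s x) = x := by rw [oct_conj_mul_left, hs, one_smul]
  have h2 (x : Oct) : mul s (mul (conj s) x) = x := by rw [oct_mul_conj_left, hs, one_smul]
  have h3 (x : Oct) : mul (mul x (conj s)) s = x := by rw [oct_conj_mul_right, hs, one_smul]
  have h4 (x : Oct) : mul (mul x s) (conj s) = x := by rw [oct_mul_conj_right, hs, one_smul]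
  have hc : normSq (conj s) = 1 := by rw [oct_normSq_conj, hs]
  refine ⟨octLeft s (conj s) h1 h2, octLeft (conj s) s h2 h1,
    (octRight (conj s) s h3 h4).trans (octLeft (conj s) s h2 h1), ⟨?_, ?_, ?_, ?_⟩,
    fun _ => rfl, fun _ => rfl, fun x => ⟨rfl, oct_flex _ _⟩⟩
  · intro x
    change normSq (mul s x) = _
    rw [oct_normSq_mul, hs, one_mul]
  · intro x
    change normSq (mul (conj s) x) = _
    rw [oct_normSq_mul, hc, one_mul]
  · intro x
    change normSq (mul (conj s) (mul x (conj s))) = _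
    rw [oct_normSq_mul, oct_normSq_mul, hc, one_mul, mul_one]
  · intro x y
    change mul (conj s) (mul x y) = mul (mul (conj s) (mul x (conj s))) (mul s y)
    rw [oct_moufang, h1]
end
end
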